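/- The series Σ_{i=1,3,5,…} 1/((G+i)·i·(i+2)) over odd positive integers i converges and η := 4g · Σ_{i=1,3,5,…} 1/((G+i)·i·(i+2)) satisfies η < 0.38; in particular 0 < η < 1. -/

import Mathlib

open Real MeasureTheory Filter Set
open scoped ENNReal NNReal Classical

namespace OCF

/-- The golden ratio `G = (1+√5)/2`. -/
noncomputable def G : ℝ := (1 + Real.sqrt 5) / 2

/-- `g = (√5-1)/2`. -/
noncomputable def gg : ℝ := (Real.sqrt 5 - 1) / 2

/-- The odd Gauss map. -/
noncomputable def T (x : ℝ) : ℝ :=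
  if x = 0 then 0
  else if Odd ⌊1 / x⌋ then Int.fract (1 / x) else 1 - Int.fract (1 / x)

/-- `eps x n` is `ε_n(x)`; by convention `ε_0(x) = 1`. -/
noncomputable def eps (x : ℝ) : ℕ → ℤ
  | 0 => 1
  | n + 1 => if Odd ⌊1 / (T^[n] x)⌋ then 1 else -1

/-- `a x n` is the `n`-th odd partial quotient `a_n(x)` (for `n ≥ 1`). -/
noncomputable def a (x : ℝ) : ℕ → ℤ
  | 0 => 1
  | n + 1 => if Odd ⌊1 / (T^[n] x)⌋ then ⌊1 / (T^[n] x)⌋ else 1 + ⌊1 / (T^[n] x)⌋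

/-- `r x n = r_n(x) = a_n(x) + ε_n(x) Tⁿ(x)` for `n ≥ 1`. -/
noncomputable def r (x : ℝ) (n : ℕ) : ℝ := (a x n : ℝ) + (eps x n : ℝ) * T^[n] x

/-- The distribution functions: `H μ 0 x = μ([0,x])` and, for `n ≥ 1`,
`H μ n x = μ({y ∈ (0,1) : y irrational, 1/r_{n+1}(y) < x})`. -/
noncomputable def H (μ : Measure ℝ) : ℕ → ℝ → ℝ
  | 0 => fun x => (μ (Set.Icc 0 x)).toReal
  | n + 1 => fun x =>
      (μ {y | y ∈ Set.Ioo (0 : ℝ) 1 ∧ Irrational y ∧ 1 / r y (n + 2) < x}).toReal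

/-- `h μ n x = H_n'(x) / ((x+G-1)⁻¹ - (x-G-1)⁻¹)`, the derivative being taken within `[0,1]`. -/
noncomputable def h (μ : Measure ℝ) (n : ℕ) (x : ℝ) : ℝ :=
  derivWithin (H μ n) (Set.Icc 0 1) x / ((x + G - 1)⁻¹ - (x - G - 1)⁻¹)

/-- `η = 4g Σ_{i odd} 1/((G+i) i (i+2))`. -/
noncomputable def eta : ℝ :=
  4 * gg * ∑' m : ℕ, 1 / ((G + (2 * (m : ℝ) + 1)) * (2 * (m : ℝ) + 1) * (2 * (m : ℝ) + 3))

end OCF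

open OCF

theorem ocf_aux_tail (x : ℝ) (hx : 1.618 ≤ x) (n : ℕ) :
    ∑ m ∈ Finset.range n, 1 / ((x + (2 * ((m + 4 : ℕ) : ℝ) + 1)) * (2 * ((m + 4 : ℕ) : ℝ) + 1)
      * (2 * ((m + 4 : ℕ) : ℝ) + 3)) ≤ 1 / 10.618 * (1 / 18 - 1 / (2 * (2 * (n : ℝ) + 9))) := by
  induction n with
  | zero => norm_num
  | succ k ih =>
    rw [Finset.sum_range_succ]
    have hk : (0 : ℝ) ≤ k := Nat.cast_nonneg k
    have key : 1 / ((x + (2 * ((k + 4 : ℕ) : ℝ) + 1)) * (2 * ((k + 4 : ℕ) : ℝ) + 1)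
      * (2 * ((k + 4 : ℕ) : ℝ) + 3)) ≤ 1 / (10.618 * (2 * (k : ℝ) + 9) * (2 * (k : ℝ) + 11)) := by
      push_cast
      apply one_div_le_one_div_of_le (by positivity)
      have e1 : 2 * ((k : ℝ) + 4) + 1 = 2 * k + 9 := by ring
      have e2 : 2 * ((k : ℝ) + 4) + 3 = 2 * k + 11 := by ring
      rw [e1, e2]
      gcongr
      linarith
    have e : 1 / (10.618 * (2 * (k : ℝ) + 9) * (2 * (k : ℝ) + 11)) =
      1 / 10.618 * (1 / 18 - 1 / (2 * (2 * ((k + 1 : ℕ) : ℝ) + 9)))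
      - 1 / 10.618 * (1 / 18 - 1 / (2 * (2 * (k : ℝ) + 9))) := by
      push_cast
      have e2 : 2 * ((k : ℝ) + 1) + 9 = 2 * k + 11 := by ring
      rw [e2]
      have h1 : 2 * (k : ℝ) + 9 ≠ 0 := by positivity
      have h2 : 2 * (k : ℝ) + 11 ≠ 0 := by positivity
      field_simp
      ring
    linarith

/-- The series `Σ_{i odd} 1/((G+i) i (i+2))` converges and
`η = 4g Σ_{i odd} 1/((G+i) i (i+2)) < 0.38`; in particular `0 < η < 1`. -/
theorem ocf_eta_lt_one :
    Summable (fun m : ℕ =>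
      1 / ((G + (2 * (m : ℝ) + 1)) * (2 * (m : ℝ) + 1) * (2 * (m : ℝ) + 3))) ∧
    eta < 0.38 ∧ 0 < eta ∧ eta < 1 := by
  have s1 : (2.236 : ℝ) ≤ Real.sqrt 5 := Real.le_sqrt_of_sq_le (by norm_num)
  have s2 : Real.sqrt 5 ≤ 2.2361 := (Real.sqrt_le_left (by norm_num)).2 (by norm_num)
  have hG : 1.618 ≤ G := by unfold G; linarith
  have hg : gg ≤ 0.61805 := by unfold gg; linarith
  have hg0 : 0 < gg := by unfold gg; linarith
  have hb : ∀ n : ℕ, ∑ m ∈ Finset.range n, 1 / ((G + (2 * ((m + 4 : ℕ) : ℝ) + 1)) *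
      (2 * ((m + 4 : ℕ) : ℝ) + 1) * (2 * ((m + 4 : ℕ) : ℝ) + 3)) ≤ 1 / 10.618 * (1 / 18) := by
    intro n
    refine (ocf_aux_tail G hG n).trans ?_
    gcongr
    have : (0 : ℝ) ≤ 1 / (2 * (2 * (n : ℝ) + 9)) := by positivity
    linarith
  have hG0 : 0 < G := by linarith
  have hpos : ∀ m : ℕ, 0 < 1 / ((G + (2 * (m : ℝ) + 1)) * (2 * (m : ℝ) + 1) * (2 * (m : ℝ) + 3)) :=
    fun m => by positivity
  have hs4 := summable_of_sum_range_le (fun m => (hpos (m + 4)).le) hb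
  have ht4 := Real.tsum_le_of_sum_range_le (fun m => (hpos (m + 4)).le) hb
  have hs : Summable (fun m : ℕ =>
      1 / ((G + (2 * (m : ℝ) + 1)) * (2 * (m : ℝ) + 1) * (2 * (m : ℝ) + 3))) :=
    (summable_nat_add_iff 4).1 hs4
  have hsplit := hs.sum_add_tsum_nat_add 4
  have hp := hs.tsum_pos (fun m => (hpos m).le) 0 (hpos 0)
  have t (i c : ℝ) (hi : 0 < i) (hc : 0 < c) : 1 / ((G + i) * i * c) ≤ 1 / ((1.618 + i) * i * c) := by
    gcongr
  have b0 := t 1 3 (by norm_num) (by norm_num)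
  have b1 := t 3 5 (by norm_num) (by norm_num)
  have b2 := t 5 7 (by norm_num) (by norm_num)
  have b3 := t 7 9 (by norm_num) (by norm_num)
  have hS : ∑' m : ℕ, 1 / ((G + (2 * (m : ℝ) + 1)) * (2 * (m : ℝ) + 1) * (2 * (m : ℝ) + 3))
      ≤ 0.1534 := by
    rw [← hsplit]
    have hf : ∑ m ∈ Finset.range 4, 1 / ((G + (2 * (m : ℝ) + 1)) * (2 * (m : ℝ) + 1)
        * (2 * (m : ℝ) + 3)) = 1 / ((G + 1) * 1 * 3) + 1 / ((G + 3) * 3 * 5)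
        + 1 / ((G + 5) * 5 * 7) + 1 / ((G + 7) * 7 * 9) := by
      simp only [Finset.sum_range_succ, Finset.sum_range_zero]
      norm_num
    rw [hf]
    norm_num only at b0 b1 b2 b3 ht4 ⊢
    linarith
  have h38 : eta < 0.38 := by
    unfold eta
    calc _ ≤ 4 * 0.61805 * (0.1534 : ℝ) := by gcongr
      _ < _ := by norm_num
  refine ⟨hs, h38, ?_, h38.trans (by norm_num)⟩
  unfold eta
  exact mul_pos (by linarith) hp
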